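/- Let Λ be a proper Λ-sequence and let K ⊆ CΛBV_c be a set of functions that is bounded (sup_{f∈K} ‖f‖_Λ < ∞) and closed under ‖·‖_Λ-convergence (if f_k ∈ K, g is of bounded Λ-variation and ‖f_k − g‖_Λ → 0, then g ∈ K). Then K is compact in the ‖·‖_Λ norm — i.e., every sequence in K has a subsequence converging in ‖·‖_Λ to an element of K — if and only if ‖B_nf − f‖_Λ → 0 as n → ∞ uniformly in f ∈ K, i.e. sup_{f∈K} ‖B_nf − f‖_Λ → 0. -/

import Mathlib

open Filter Set MeasureTheory
open scoped ENNReal Topology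

/-- `l` is a Λ-sequence (indexed from 0, so `l 0` plays the role of `λ₁`):
a nondecreasing sequence of positive reals whose reciprocals have divergent sum. -/
def IsLambdaSeq (l : ℕ → ℝ) : Prop :=
  Monotone l ∧ (∀ n, 0 < l n) ∧ ¬ Summable (fun n => 1 / l n)

/-- A proper Λ-sequence: additionally `λₙ → ∞`. -/
def IsProperLambdaSeq (l : ℕ → ℝ) : Prop :=
  IsLambdaSeq l ∧ Tendsto l atTop atTop

/-- The Λ-variation of `f` computed over partition points taken from `K`:
the supremum of `∑ⱼ |f(x_{j+1}) - f(x_j)| / λ_{β(j)}` over all `m`, all nondecreasing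
tuples `x₁ ≤ … ≤ x_{m+1}` of points of `K` and all permutations `β` of the gaps. -/
noncomputable def lamVarOn (l : ℕ → ℝ) (f : ℝ → ℝ) (K : Set ℝ) : ℝ≥0∞ :=
  ⨆ (m : ℕ) (x : Fin (m + 1) → ℝ) (_ : Monotone x) (_ : ∀ j, x j ∈ K)
    (β : Equiv.Perm (Fin m)),
    ∑ j : Fin m, ENNReal.ofReal (|f (x j.succ) - f (x j.castSucc)| / l (β j))

/-- The Λ-variation of `f : [0,1] → ℝ`. -/
noncomputable def lamVar (l : ℕ → ℝ) (f : ℝ → ℝ) : ℝ≥0∞ :=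
  lamVarOn l f (Set.Icc 0 1)

/-- The norm `‖f‖_Λ = V_Λ(f) + |f 0|` (valued in `[0,∞]`). -/
noncomputable def lamNorm (l : ℕ → ℝ) (f : ℝ → ℝ) : ℝ≥0∞ :=
  lamVar l f + ENNReal.ofReal |f 0|

/-- `f` is continuous in Λ-variation: `V_{Λ_(m)}(f) → 0` as `m → ∞`. -/
def ContInLamVar (l : ℕ → ℝ) (f : ℝ → ℝ) : Prop :=
  Tendsto (fun m => lamVar (fun n => l (n + m)) f) atTop (𝓝 0)

/-- The restricted Λ-variation `V_{Λ,δ}(f)`: the supremum of `∑ⱼ |f(bⱼ) - f(aⱼ)| / λⱼ`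
over all finite sequences of nonoverlapping closed subintervals `[aⱼ, bⱼ]` of `[0,1]`
of length at most `δ`, listed in any order. -/
noncomputable def lamVarDelta (l : ℕ → ℝ) (δ : ℝ) (f : ℝ → ℝ) : ℝ≥0∞ :=
  ⨆ (k : ℕ) (a : Fin k → ℝ) (b : Fin k → ℝ)
    (_ : ∀ j, 0 ≤ a j ∧ a j ≤ b j ∧ b j ≤ 1 ∧ b j - a j ≤ δ)
    (_ : ∀ i j, i ≠ j → b i ≤ a j ∨ b j ≤ a i),
    ∑ j : Fin k, ENNReal.ofReal (|f (b j) - f (a j)| / l j)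

/-- The `n`-th Bernstein polynomial of `f : [0,1] → ℝ`. -/
noncomputable def bern (n : ℕ) (f : ℝ → ℝ) (x : ℝ) : ℝ :=
  ∑ k ∈ Finset.range (n + 1),
    f ((k : ℝ) / n) * (n.choose k : ℝ) * x ^ k * (1 - x) ^ (n - k)

/-- The `n`-th Kantorovich polynomial of `f : [0,1] → ℝ`. -/
noncomputable def kant (n : ℕ) (f : ℝ → ℝ) (x : ℝ) : ℝ :=
  ∑ k ∈ Finset.range (n + 1),
    (n.choose k : ℝ) * x ^ k * (1 - x) ^ (n - k) *
      ((n + 1) * ∫ t in ((k : ℝ) / (n + 1))..(((k : ℝ) + 1) / (n + 1)), f t)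

/-!
Let `U₁, …, Uₙ` be independent uniform points of `[0,1]`. Then `B_n f x` is the expectation of
`f (#{i | U_i ≤ x} / n)`, and for each outcome the argument of `f` is nondecreasing in `x`.
Averaging over the outcomes gives `V_Λ(B_n f) ≤ V_Λ(f)` for every weight sequence, in particular
for the tails `Λ_(m)`.

If `f` is continuous and continuous in Λ-variation, then `‖B_n f - f‖_Λ → 0`: the first `m` weights
contribute at most a multiple of `sup |B_n f - f|`, the others at most `2 V_{Λ_(m)}(f)`. Since the
`B_n` are contractions, this convergence is uniform on compact sets. Conversely, `B_n` has finite
rank, so it maps bounded sets to totally bounded ones; if `B_n → id` uniformly on `K`, then `K` is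
itself totally bounded, and it is compact because it is closed in a complete space.
-/

open scoped unitInterval NNReal

section Uniform

theorem tendstoUniformlyOn_iff_tendsto_iSup_edist {ι α β : Type*} [PseudoEMetricSpace β]
    {F : ι → α → β} {f : α → β} {p : Filter ι} {s : Set α} :
    TendstoUniformlyOn F f p s ↔ Tendsto (fun n => ⨆ x ∈ s, edist (F n x) (f x)) p (𝓝 0) := by
  rw [EMetric.tendstoUniformlyOn_iff, ENNReal.tendsto_nhds_zero]
  simp only [iSup_le_iff, edist_comm (F _ _)]
  refine ⟨fun h ε hε => (h ε hε).mono fun n hn x hx => (hn x hx).le, fun h ε hε => ?_⟩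
  obtain ⟨δ, hδ, hδε⟩ := exists_between hε
  exact (h δ hδ).mono fun n hn x hx => (hn x hx).trans_lt hδε

theorem totallyBounded_image_of_tendstoUniformlyOn {ι α β : Type*} [UniformSpace β]
    {F : ι → α → β} {f : α → β} {p : Filter ι} [p.NeBot] {s : Set α}
    (hF : TendstoUniformlyOn F f p s) (hFs : ∀ n, TotallyBounded (F n '' s)) :
    TotallyBounded (f '' s) := by
  intro U hU
  obtain ⟨V, hV, hVU⟩ := comp_mem_uniformity_sets hU
  obtain ⟨n, hn⟩ := (hF V hV).exists
  obtain ⟨t, ht, htV⟩ := hFs n V hV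
  refine ⟨t, ht, forall_mem_image.2 fun x hx => ?_⟩
  obtain ⟨y, hy, hxy⟩ := mem_iUnion₂.1 (htV (mem_image_of_mem _ hx))
  exact mem_iUnion₂.2 ⟨y, hy, hVU ⟨F n x, hn x hx, hxy⟩⟩

theorem tendstoUniformlyOn_of_equicontinuousOn {ι α β : Type*} [TopologicalSpace α]
    [UniformSpace β] {F : ι → α → β} {f : α → β} {p : Filter ι} {K : Set α} (hK : IsCompact K)
    (hF : EquicontinuousOn F K) (hFf : ∀ x ∈ K, Tendsto (fun n => F n x) p (𝓝 (f x))) :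
    TendstoUniformlyOn F f p K := by
  have h_unif := (EquicontinuousOn.tendsto_uniformOnFun_iff_pi' (𝔖 := {K}) (by simpa) (by simpa)
    p f).2 (tendsto_pi_nhds.2 fun x => hFf x (by simpa using x.2))
  simpa [Function.comp_def] using UniformOnFun.tendsto_iff_tendstoUniformlyOn.1 h_unif

end Uniform

/-- The sum `∑ⱼ |f(x_{j+1}) - f(x_j)| / λ_{β(j)}`, an element of `[0,∞]`. It is written as a sum of
products so that the estimates below need no sign condition on `l`: since `ENNReal.ofReal` truncates
at `0`, an index with `l k ≤ 0` has weight `0`. -/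
noncomputable def lamSum (l : ℕ → ℝ) (f : ℝ → ℝ) {m : ℕ} (x : Fin (m + 1) → ℝ)
    (β : Equiv.Perm (Fin m)) : ℝ≥0∞ :=
  ∑ j : Fin m, ‖f (x j.succ) - f (x j.castSucc)‖ₑ * ENNReal.ofReal (l (β j))⁻¹

section LamVarOn

variable {l : ℕ → ℝ} {f g : ℝ → ℝ} {S : Set ℝ} {B : ℝ≥0∞}

theorem lamVarOn_le_iff :
    lamVarOn l f S ≤ B ↔ ∀ (m : ℕ) (x : Fin (m + 1) → ℝ), Monotone x → (∀ j, x j ∈ S) →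
      ∀ β : Equiv.Perm (Fin m), lamSum l f x β ≤ B := by
  simp only [lamVarOn, lamSum, iSup_le_iff, div_eq_mul_inv, ENNReal.ofReal_mul (abs_nonneg _),
    Real.enorm_eq_ofReal_abs]

theorem lamSum_le_lamVarOn {m : ℕ} {x : Fin (m + 1) → ℝ} (hx : Monotone x) (hxS : ∀ j, x j ∈ S)
    (β : Equiv.Perm (Fin m)) : lamSum l f x β ≤ lamVarOn l f S :=
  lamVarOn_le_iff.1 le_rfl m x hx hxS β

theorem lamVarOn_add_le :
    lamVarOn l (fun x => f x + g x) S ≤ lamVarOn l f S + lamVarOn l g S := by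
  refine lamVarOn_le_iff.2 fun m x hx hxS β => ?_
  calc lamSum l (fun x => f x + g x) x β ≤ lamSum l f x β + lamSum l g x β := by
        simp only [lamSum, add_sub_add_comm, ← Finset.sum_add_distrib, ← add_mul]
        gcongr
        exact enorm_add_le _ _
    _ ≤ lamVarOn l f S + lamVarOn l g S :=
        add_le_add (lamSum_le_lamVarOn hx hxS β) (lamSum_le_lamVarOn hx hxS β)

theorem lamVarOn_const_mul_le (c : ℝ) :
    lamVarOn l (fun x => c * f x) S ≤ ‖c‖ₑ * lamVarOn l f S := by
  refine lamVarOn_le_iff.2 fun m x hx hxS β => ?_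
  calc lamSum l (fun x => c * f x) x β = ‖c‖ₑ * lamSum l f x β := by
        simp only [lamSum, ← mul_sub, enorm_mul, mul_assoc, Finset.mul_sum]
    _ ≤ ‖c‖ₑ * lamVarOn l f S := by gcongr; exact lamSum_le_lamVarOn hx hxS β

theorem lamVarOn_sub_le :
    lamVarOn l (fun x => f x - g x) S ≤ lamVarOn l f S + lamVarOn l g S := by
  have h_neg : lamVarOn l (fun x => -g x) S ≤ lamVarOn l g S := by
    simpa using lamVarOn_const_mul_le (f := g) (-1)
  calc lamVarOn l (fun x => f x - g x) S
      ≤ lamVarOn l f S + lamVarOn l (fun x => -g x) S := by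
        simpa only [sub_eq_add_neg] using lamVarOn_add_le
    _ ≤ lamVarOn l f S + lamVarOn l g S := by gcongr

theorem enorm_sub_mul_le_lamVarOn {a b : ℝ} (ha : a ∈ S) (hb : b ∈ S) (hab : a ≤ b) :
    ‖f b - f a‖ₑ * ENNReal.ofReal (l 0)⁻¹ ≤ lamVarOn l f S := by
  have h_mono : Monotone ![a, b] := by simpa [Fin.monotone_iff_le_succ] using hab
  have h_mem : ∀ j, ![a, b] j ∈ S := by simp [Fin.forall_fin_two, ha, hb]
  simpa [lamSum] using lamSum_le_lamVarOn (l := l) (f := f) h_mono h_mem 1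

theorem lamVarOn_le_eVariationOn_mul {c : ℝ} (hc : 0 < c) (hl : ∀ n, c ≤ l n) :
    lamVarOn l f S ≤ eVariationOn f S * ENNReal.ofReal c⁻¹ := by
  refine lamVarOn_le_iff.2 fun m x hx hxS β => ?_
  have h_clamp : Monotone fun i => x (Fin.clamp i m) := fun i j hij =>
    hx (Fin.mk_le_mk.2 (min_le_min_right m hij))
  calc lamSum l f x β
      ≤ ∑ j : Fin m, ‖f (x j.succ) - f (x j.castSucc)‖ₑ * ENNReal.ofReal c⁻¹ := by
        unfold lamSum
        gcongr
        exact hl _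
    _ = (∑ i ∈ Finset.range m, edist (f (x (Fin.clamp (i + 1) m))) (f (x (Fin.clamp i m)))) *
          ENNReal.ofReal c⁻¹ := by
        rw [Finset.sum_range, Finset.sum_mul]
        refine Finset.sum_congr rfl fun j _ => ?_
        rw [edist_eq_enorm_sub]
        congr <;> ext <;> simp [Fin.clamp]
    _ ≤ eVariationOn f S * ENNReal.ofReal c⁻¹ := by
        gcongr
        exact eVariationOn.sum_le h_clamp fun i => hxS _

end LamVarOn

section Shift

theorem exists_perm_add_eq {N : ℕ} (β : Equiv.Perm (Fin N)) (m : ℕ) :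
    ∃ γ : Equiv.Perm (Fin N), ∀ j, m ≤ (β j : ℕ) → (γ j : ℕ) + m = β j := by
  by_cases hm : m < N
  · have : NeZero N := ⟨by lia⟩
    refine ⟨β.trans (Equiv.subRight ⟨m, hm⟩), fun j hj => ?_⟩
    have h_val : ((β j - ⟨m, hm⟩ : Fin N) : ℕ) = β j - m := Fin.sub_val_of_le hj
    simp only [Equiv.trans_apply, Equiv.subRight_apply, h_val]
    lia
  · exact ⟨β, fun j hj => by lia⟩

theorem sum_ite_perm_lt_le {N : ℕ} (β : Equiv.Perm (Fin N)) (m : ℕ) (w : ℕ → ℝ≥0∞) :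
    ∑ j, (if (β j : ℕ) < m then w (β j) else 0) ≤ ∑ k ∈ Finset.range m, w k := by
  rw [Equiv.sum_comp β fun k : Fin N => if (k : ℕ) < m then w k else 0,
    ← Finset.sum_range fun k => if k < m then w k else 0, ← Finset.sum_filter]
  exact Finset.sum_le_sum_of_subset fun k => by simp +contextual

variable {l : ℕ → ℝ} {f : ℝ → ℝ} {S : Set ℝ} {D : ℝ≥0∞}

theorem lamVarOn_le_add_lamVarOn_shift (hD : ∀ x ∈ S, ∀ y ∈ S, ‖f x - f y‖ₑ ≤ D) (m : ℕ) :
    lamVarOn l f S ≤ D * ∑ k ∈ Finset.range m, ENNReal.ofReal (l k)⁻¹ +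
      lamVarOn (fun n => l (n + m)) f S := by
  refine lamVarOn_le_iff.2 fun N x hx hxS β => ?_
  obtain ⟨γ, hγ⟩ := exists_perm_add_eq β m
  calc lamSum l f x β
      ≤ ∑ j, (D * (if (β j : ℕ) < m then ENNReal.ofReal (l (β j))⁻¹ else 0) +
          ‖f (x j.succ) - f (x j.castSucc)‖ₑ * ENNReal.ofReal (l (γ j + m))⁻¹) := by
        refine Finset.sum_le_sum fun j _ => ?_
        split_ifs with hj
        · exact le_add_right (by gcongr; exact hD _ (hxS _) _ (hxS _))
        · rw [hγ j (not_lt.1 hj), mul_zero, zero_add]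
    _ = D * ∑ j, (if (β j : ℕ) < m then ENNReal.ofReal (l (β j))⁻¹ else 0) +
          lamSum (fun n => l (n + m)) f x γ := by
        rw [Finset.sum_add_distrib, Finset.mul_sum, lamSum]
    _ ≤ _ := by
        gcongr
        · exact sum_ite_perm_lt_le β m fun k => ENNReal.ofReal (l k)⁻¹
        · exact lamSum_le_lamVarOn hx hxS γ

end Shift

section LamNorm

variable {l : ℕ → ℝ} {f g : ℝ → ℝ}

theorem lamNorm_eq_lamVar_add_enorm : lamNorm l f = lamVar l f + ‖f 0‖ₑ := by
  rw [lamNorm, Real.enorm_eq_ofReal_abs]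

theorem lamVar_le_lamNorm : lamVar l f ≤ lamNorm l f := le_self_add

theorem lamNorm_zero : lamNorm l (fun _ => 0) = 0 := by
  have h_var : lamVar l (fun _ => 0) ≤ 0 := lamVarOn_le_iff.2 fun m x _ _ β => by simp [lamSum]
  simpa [lamNorm] using h_var

theorem lamNorm_add_le : lamNorm l (fun x => f x + g x) ≤ lamNorm l f + lamNorm l g := by
  simp only [lamNorm_eq_lamVar_add_enorm]
  calc lamVar l (fun x => f x + g x) + ‖f 0 + g 0‖ₑ
      ≤ (lamVar l f + lamVar l g) + (‖f 0‖ₑ + ‖g 0‖ₑ) :=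
        add_le_add lamVarOn_add_le (enorm_add_le _ _)
    _ = _ := add_add_add_comm ..

theorem lamNorm_const_mul_le (c : ℝ) : lamNorm l (fun x => c * f x) ≤ ‖c‖ₑ * lamNorm l f := by
  simp only [lamNorm_eq_lamVar_add_enorm, mul_add, enorm_mul]
  gcongr
  exact lamVarOn_const_mul_le c

theorem lamNorm_sub_comm : lamNorm l (fun x => f x - g x) = lamNorm l (fun x => g x - f x) := by
  have h_neg : ∀ h : ℝ → ℝ, lamNorm l (fun x => -h x) ≤ lamNorm l h := fun h => by
    simpa using lamNorm_const_mul_le (f := h) (-1)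
  refine le_antisymm ?_ ?_
  · simpa only [neg_sub] using h_neg fun x => g x - f x
  · simpa only [neg_sub] using h_neg fun x => f x - g x

theorem lamNorm_sum_const_mul_le {ι : Type*} (s : Finset ι) (a : ι → ℝ) (b : ι → ℝ → ℝ) :
    lamNorm l (fun x => ∑ i ∈ s, a i * b i x) ≤ ∑ i ∈ s, ‖a i‖ₑ * lamNorm l (b i) := by
  classical
  induction s using Finset.induction_on with
  | empty => simp [lamNorm_zero]
  | insert i s hi ih =>
    simp only [Finset.sum_insert hi]
    exact lamNorm_add_le.trans (add_le_add (lamNorm_const_mul_le _) ih)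

theorem enorm_apply_le_mul_lamNorm (hl : 0 < l 0) {x : ℝ} (hx : x ∈ Icc (0 : ℝ) 1) :
    ‖f x‖ₑ ≤ ((l 0).toNNReal + 1 : ℝ≥0) * lamNorm l f := by
  have h_inc : ‖f x - f 0‖ₑ ≤ ENNReal.ofReal (l 0) * lamVar l f := by
    have h_var : ‖f x - f 0‖ₑ * ENNReal.ofReal (l 0)⁻¹ ≤ lamVar l f :=
      enorm_sub_mul_le_lamVarOn (by simp) hx hx.1
    rwa [ENNReal.ofReal_inv_of_pos hl, ← div_eq_mul_inv, ENNReal.div_le_iff' (by simpa) (by simp)]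
      at h_var
  calc ‖f x‖ₑ = ‖(f x - f 0) + f 0‖ₑ := by rw [sub_add_cancel]
    _ ≤ ‖f x - f 0‖ₑ + ‖f 0‖ₑ := enorm_add_le _ _
    _ ≤ ENNReal.ofReal (l 0) * lamNorm l f + lamNorm l f := by
        gcongr
        · exact h_inc.trans (by gcongr; exact lamVar_le_lamNorm)
        · exact lamNorm_eq_lamVar_add_enorm.ge.trans' le_add_self
    _ = ((l 0).toNNReal + 1 : ℝ≥0) * lamNorm l f := by
        rw [ENNReal.coe_add, add_mul, ENNReal.coe_one, one_mul, ENNReal.ofReal]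

theorem lamNorm_le_of_tendsto {ι : Type*} {p : Filter ι} [p.NeBot] {F : ι → ℝ → ℝ} {B : ℝ≥0∞}
    (hF : ∀ x ∈ Icc (0 : ℝ) 1, Tendsto (fun i => F i x) p (𝓝 (f x)))
    (hB : ∀ᶠ i in p, lamNorm l (F i) ≤ B) : lamNorm l f ≤ B := by
  simp only [lamNorm_eq_lamVar_add_enorm] at hB ⊢
  have h_zero : Tendsto (fun i => ‖F i 0‖ₑ) p (𝓝 ‖f 0‖ₑ) := (hF 0 (by simp)).enorm
  have h_zero_le : ‖f 0‖ₑ ≤ B := le_of_tendsto h_zero (hB.mono fun i hi => le_add_self.trans hi)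
  suffices lamVar l f ≤ B - ‖f 0‖ₑ by
    simpa only [tsub_add_cancel_of_le h_zero_le] using add_le_add_left this ‖f 0‖ₑ
  refine lamVarOn_le_iff.2 fun m x hx hxI β => ENNReal.le_sub_of_add_le_right enorm_ne_top ?_
  have h_sum : Tendsto (fun i => lamSum l (F i) x β) p (𝓝 (lamSum l f x β)) :=
    tendsto_finsetSum _ fun j _ => ENNReal.Tendsto.mul_const
      ((hF _ (hxI _)).sub (hF _ (hxI _))).enorm (.inr ENNReal.ofReal_ne_top)
  refine le_of_tendsto (h_sum.add h_zero) (hB.mono fun i hi => hi.trans' ?_)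
  gcongr
  exact lamSum_le_lamVarOn hx hxI β

theorem lamNorm_lt_top_of_contDiff {c : ℝ} (hc : 0 < c) (hl : ∀ n, c ≤ l n)
    (hf : ContDiff ℝ 1 f) : lamNorm l f < ⊤ := by
  obtain ⟨L, hL⟩ := hf.locallyLipschitz.locallyLipschitzOn.exists_lipschitzOnWith_of_compact
    (isCompact_Icc (a := (0 : ℝ)) (b := 1))
  have h_bv : BoundedVariationOn f (Icc 0 1) := by
    simpa using hL.locallyBoundedVariationOn 0 1 (by simp) (by simp)
  refine ENNReal.add_lt_top.2 ⟨?_, ENNReal.ofReal_lt_top⟩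
  exact (lamVarOn_le_eVariationOn_mul hc hl).trans_lt
    (ENNReal.mul_lt_top (lt_top_iff_ne_top.2 h_bv) ENNReal.ofReal_lt_top)

end LamNorm

section Bernstein

variable {l : ℕ → ℝ} {f g : ℝ → ℝ} {n : ℕ}

theorem bern_apply_zero : bern n f 0 = f 0 := by
  simp [bern, Finset.sum_range_succ']

theorem bern_sub_apply (x : ℝ) : bern n (fun y => f y - g y) x = bern n f x - bern n g x := by
  simp only [bern, sub_mul, Finset.sum_sub_distrib]

theorem bern_eq_sum_mul_eval :
    bern n f = fun x => ∑ k : Fin (n + 1),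
      f ((k : ℝ) / n) * (bernsteinPolynomial ℝ n k).eval x := by
  ext x
  simp [bern, Finset.sum_range, bernsteinPolynomial, mul_assoc]

theorem tendstoUniformlyOn_bern (hf : ContinuousOn f (Icc 0 1)) :
    TendstoUniformlyOn (fun n => bern n f) f atTop (Icc 0 1) := by
  let F : C(I, ℝ) := ⟨(Icc 0 1).domRestrict f, hf.domRestrict⟩
  have h_bern : ∀ (n : ℕ) (x : I), bernsteinApproximation n F x = bern n f x := fun n x => by
    simp only [bernsteinApproximation.apply, bern, Finset.sum_range, bernstein_apply, smul_eq_mul]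
    exact Finset.sum_congr rfl fun k _ => by
      change _ * f ((k : ℝ) / n) = _
      ring
  have h_unif := ContinuousMap.tendsto_iff_tendstoUniformly.1 (bernsteinApproximation_uniform F)
  rw [tendstoUniformlyOn_iff_tendstoUniformly_comp_coe]
  simp only [Function.comp_def, ← h_bern]
  exact h_unif

theorem measurable_filter_le (x : I) :
    Measurable fun u : Fin n → I => ({i | u i ≤ x} : Finset (Fin n)) := by
  refine measurable_finset_iff.2 fun i => ?_
  simp only [Finset.mem_filter, Finset.mem_univ, true_and]
  exact measurableSet_setOfPred.1 (measurableSet_le (measurable_pi_apply i) measurable_const)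

theorem volume_real_filter_le_eq (x : I) (s : Finset (Fin n)) :
    volume.real {u : Fin n → I | ({i | u i ≤ x} : Finset (Fin n)) = s} =
      (x : ℝ) ^ s.card * (1 - x) ^ (n - s.card) := by
  have h_box : {u : Fin n → I | ({i | u i ≤ x} : Finset (Fin n)) = s} =
      univ.pi fun i => if i ∈ s then Iic x else Ioi x := by
    ext u
    simp only [mem_ofPred_eq, Finset.ext_iff, Finset.mem_filter, mem_univ_pi]
    refine forall_congr' fun i => ?_
    split_ifs with hi <;> simp [hi]
  rw [h_box, measureReal_def, volume_pi_pi, ENNReal.toReal_prod]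
  have h_side : ∀ i, (volume (if i ∈ s then Iic x else Ioi x)).toReal =
      if i ∈ s then (x : ℝ) else 1 - x := fun i => by
    split_ifs <;> simp [x.2.1, x.2.2]
  simp [h_side, Finset.prod_ite, Finset.filter_not, Finset.card_sdiff]

-- The number of the `n` independent uniform points `u i` lying below `x` has the binomial
-- distribution with parameters `n` and `x`.
theorem bern_eq_integral (x : I) :
    bern n f x = ∫ u : Fin n → I, f ((Finset.card {i | u i ≤ x} : ℝ) / n) := by
  let φ : Finset (Fin n) → ℝ := fun s => f ((s.card : ℝ) / n)
  have h_map : ∫ u : Fin n → I, φ {i | u i ≤ x} =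
      ∑ s, (x : ℝ) ^ s.card * (1 - x) ^ (n - s.card) * φ s := by
    rw [← integral_map (measurable_filter_le x).aemeasurable
      (measurable_of_countable φ).aestronglyMeasurable, integral_fintype .of_finite]
    refine Finset.sum_congr rfl fun s _ => ?_
    rw [map_measureReal_apply (measurable_filter_le x) (measurableSet_singleton s), smul_eq_mul]
    exact congrArg (· * φ s) (volume_real_filter_le_eq x s)
  rw [h_map, ← Finset.powerset_univ, Finset.sum_powerset_apply_card
    fun k => (x : ℝ) ^ k * (1 - x) ^ (n - k) * f ((k : ℝ) / n), Finset.card_fin, bern]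
  refine Finset.sum_congr rfl fun k _ => ?_
  rw [nsmul_eq_mul]
  ring

theorem integrable_comp_filter_le (φ : Finset (Fin n) → ℝ) (x : I) :
    Integrable fun u : Fin n → I => φ {i | u i ≤ x} :=
  Integrable.of_finite.comp_measurable (measurable_filter_le x)

theorem lamVar_bern_le : lamVar l (bern n f) ≤ lamVar l f := by
  refine lamVarOn_le_iff.2 fun m x hx hxI β => ?_
  lift x to Fin (m + 1) → I using hxI
  let y (u : Fin n → I) (j : Fin (m + 1)) : ℝ := (Finset.card {i | u i ≤ x j} : ℝ) / n
  have h_int (j : Fin (m + 1)) : Integrable fun u => f (y u j) :=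
    integrable_comp_filter_le (fun s => f ((s.card : ℝ) / n)) (x j)
  have h_mono (u : Fin n → I) : Monotone (y u) := fun i j hij => by
    simp only [y]
    gcongr
    exact hx hij
  have h_mem (u : Fin n → I) (j : Fin (m + 1)) : y u j ∈ Icc (0 : ℝ) 1 :=
    ⟨by positivity, div_le_one_of_le₀ (mod_cast Finset.card_le_univ _ |>.trans_eq (by simp))
      (by positivity)⟩
  calc lamSum l (bern n f) (fun j => (x j : ℝ)) β
      ≤ ∑ j : Fin m, (∫⁻ u, ‖f (y u j.succ) - f (y u j.castSucc)‖ₑ) *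
          ENNReal.ofReal (l (β j))⁻¹ := by
        refine Finset.sum_le_sum fun j _ => ?_
        rw [bern_eq_integral, bern_eq_integral, ← integral_sub (h_int _) (h_int _)]
        gcongr
        exact enorm_integral_le_lintegral_enorm _
    _ = ∫⁻ u, lamSum l f (y u) β := by
        simp only [← lintegral_mul_const' _ _ ENNReal.ofReal_ne_top]
        exact (lintegral_finsetSum' _ fun j _ =>
          ((h_int _).sub (h_int _)).aestronglyMeasurable.enorm.mul_const _).symm
    _ ≤ ∫⁻ _ : Fin n → I, lamVar l f :=
        lintegral_mono fun u => lamSum_le_lamVarOn (h_mono u) (h_mem u) β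
    _ = lamVar l f := by simp

theorem lamNorm_bern_le : lamNorm l (bern n f) ≤ lamNorm l f := by
  simp only [lamNorm, bern_apply_zero]
  gcongr
  exact lamVar_bern_le

theorem lamNorm_bern_sub_le (m : ℕ) :
    lamNorm l (fun x => bern n f x - f x) ≤
      2 * (⨆ x ∈ Icc (0 : ℝ) 1, edist (bern n f x) (f x)) *
          ∑ k ∈ Finset.range m, ENNReal.ofReal (l k)⁻¹ +
        2 * lamVar (fun n => l (n + m)) f := by
  have h_osc : ∀ x ∈ Icc (0 : ℝ) 1, ∀ y ∈ Icc (0 : ℝ) 1,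
      ‖(bern n f x - f x) - (bern n f y - f y)‖ₑ ≤
        2 * ⨆ x ∈ Icc (0 : ℝ) 1, edist (bern n f x) (f x) := fun x hx y hy => by
    have h_le : ∀ z ∈ Icc (0 : ℝ) 1,
        ‖bern n f z - f z‖ₑ ≤ ⨆ x ∈ Icc (0 : ℝ) 1, edist (bern n f x) (f x) := fun z hz => by
      rw [← edist_eq_enorm_sub]
      exact le_iSup₂ (f := fun x (_ : x ∈ Icc (0 : ℝ) 1) => edist (bern n f x) (f x)) z hz
    rw [two_mul]
    exact enorm_sub_le.trans (add_le_add (h_le x hx) (h_le y hy))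
  have h_tail : lamVar (fun n => l (n + m)) (fun x => bern n f x - f x) ≤
      2 * lamVar (fun n => l (n + m)) f := by
    rw [two_mul]
    exact lamVarOn_sub_le.trans (add_le_add lamVar_bern_le le_rfl)
  calc lamNorm l (fun x => bern n f x - f x)
      = lamVar l (fun x => bern n f x - f x) := by simp [lamNorm, bern_apply_zero]
    _ ≤ _ := (lamVarOn_le_add_lamVarOn_shift h_osc m).trans (by gcongr; exact h_tail)

theorem tendsto_lamNorm_bern_sub (hf : ContinuousOn f (Icc 0 1)) (hfl : ContInLamVar l f) :
    Tendsto (fun n => lamNorm l (fun x => bern n f x - f x)) atTop (𝓝 0) := by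
  refine ENNReal.tendsto_nhds_zero.2 fun ε hε => ?_
  have h_tail : Tendsto (fun m => 2 * lamVar (fun n => l (n + m)) f) atTop (𝓝 0) := by
    simpa using ENNReal.Tendsto.const_mul hfl (.inr ENNReal.ofNat_ne_top)
  obtain ⟨m, hm⟩ := (h_tail.eventually_le_const (ENNReal.half_pos hε.ne')).exists
  have h_head : Tendsto (fun n => 2 * (⨆ x ∈ Icc (0 : ℝ) 1, edist (bern n f x) (f x)) *
      ∑ k ∈ Finset.range m, ENNReal.ofReal (l k)⁻¹) atTop (𝓝 0) := by
    have h_sup := tendstoUniformlyOn_iff_tendsto_iSup_edist.1 (tendstoUniformlyOn_bern hf)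
    simpa using ENNReal.Tendsto.mul_const
      (ENNReal.Tendsto.const_mul h_sup (.inr (ENNReal.ofNat_ne_top (n := 2))))
      (.inr (ENNReal.sum_ne_top.2 fun k _ => ENNReal.ofReal_ne_top))
  filter_upwards [h_head.eventually_le_const (ENNReal.half_pos hε.ne')] with n hn
  calc _ ≤ ε / 2 + ε / 2 := (lamNorm_bern_sub_le m).trans (add_le_add hn hm)
    _ = ε := ENNReal.add_halves ε

end Bernstein

/-- The space of all functions `ℝ → ℝ` with the extended distance `‖f - g‖_Λ`. The distance may be
infinite, and it vanishes when `f` and `g` agree on `[0,1]`, whence only a pseudo-emetric space. -/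
def LambdaSpace (_l : ℕ → ℝ) : Type := ℝ → ℝ

namespace LambdaSpace

variable {l : ℕ → ℝ}

instance : FunLike (LambdaSpace l) ℝ ℝ where
  coe f := f
  coe_injective _ _ h := h

noncomputable instance : PseudoEMetricSpace (LambdaSpace l) where
  edist f g := lamNorm l (fun x => f x - g x)
  edist_self f := by simp [lamNorm_zero]
  edist_comm f g := lamNorm_sub_comm
  edist_triangle f g h := by
    simpa only [sub_add_sub_cancel] using
      lamNorm_add_le (l := l) (f := fun x => f x - g x) (g := fun x => g x - h x)

theorem edist_eq (f g : LambdaSpace l) : edist f g = lamNorm l (fun x => f x - g x) := rfl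

theorem lipschitzWith_apply (hl : 0 < l 0) {x : ℝ} (hx : x ∈ Icc (0 : ℝ) 1) :
    LipschitzWith ((l 0).toNNReal + 1) fun f : LambdaSpace l => f x := fun f g => by
  rw [edist_eq_enorm_sub, edist_eq]
  exact enorm_apply_le_mul_lamNorm hl (f := fun y => f y - g y) hx

theorem completeSpace (hl : 0 < l 0) : CompleteSpace (LambdaSpace l) := by
  refine EMetric.complete_of_cauchySeq_tendsto fun F hF => ?_
  have h_lim : ∀ x ∈ Icc (0 : ℝ) 1, ∃ y, Tendsto (fun k => F k x) atTop (𝓝 y) := fun x hx =>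
    cauchySeq_tendsto_of_complete ((lipschitzWith_apply hl hx).uniformContinuous.comp_cauchySeq hF)
  choose! g hg using h_lim
  refine ⟨g, EMetric.tendsto_atTop.2 fun ε hε => ?_⟩
  obtain ⟨δ, hδ, hδε⟩ := exists_between hε
  obtain ⟨N, hN⟩ := EMetric.cauchySeq_iff.1 hF δ hδ
  refine ⟨N, fun k hk => hδε.trans_le' ?_⟩
  refine lamNorm_le_of_tendsto (p := atTop) (F := fun j x => F k x - F j x)
    (fun x hx => (hg x hx).const_sub _) ?_
  filter_upwards [eventually_ge_atTop N] with j hj using (hN k hk j hj).le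

/-- The Bernstein operator `B_n` as a self-map of `LambdaSpace l`, so that contractivity and uniform
convergence can be stated for the distance `‖f - g‖_Λ`. -/
noncomputable def bernOp (l : ℕ → ℝ) (n : ℕ) (f : LambdaSpace l) : LambdaSpace l := bern n ⇑f

theorem lipschitzWith_bernOp (n : ℕ) : LipschitzWith 1 (bernOp l n) := fun f g => by
  simp only [ENNReal.coe_one, one_mul, edist_eq]
  calc lamNorm l (fun x => bern n ⇑f x - bern n ⇑g x)
      = lamNorm l (bern n fun x => f x - g x) :=
        congrArg _ (funext fun x => (bern_sub_apply x).symm)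
    _ ≤ _ := lamNorm_bern_le

/-- The function `∑ i, a i • b i` as a point of `LambdaSpace l`. With the Bernstein basis
polynomials for `b`, this parametrizes the range of `B_n` by the values at the nodes. -/
def linComb (l : ℕ → ℝ) {ι : Type*} [Fintype ι] (b : ι → ℝ → ℝ) (a : ι → ℝ) : LambdaSpace l :=
  fun x => ∑ i, a i * b i x

theorem lipschitzWith_linComb {ι : Type*} [Fintype ι] {b : ι → ℝ → ℝ}
    (hb : ∀ i, lamNorm l (b i) < ⊤) :
    LipschitzWith (∑ i, lamNorm l (b i)).toNNReal (linComb l b) := fun a a' => by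
  rw [ENNReal.coe_toNNReal (ENNReal.sum_ne_top.2 fun i _ => (hb i).ne), Finset.sum_mul]
  calc lamNorm l (fun x => ∑ i, a i * b i x - ∑ i, a' i * b i x)
      = lamNorm l (fun x => ∑ i, (a i - a' i) * b i x) := by
        simp only [sub_mul, Finset.sum_sub_distrib]
    _ ≤ ∑ i, ‖a i - a' i‖ₑ * lamNorm l (b i) := lamNorm_sum_const_mul_le _ _ _
    _ ≤ ∑ i, lamNorm l (b i) * edist a a' := by
        simp only [mul_comm (lamNorm l _), ← edist_eq_enorm_sub]
        gcongr with i
        exact edist_le_pi_edist a a' i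

-- The values of `f ∈ K` at the `n + 1` nodes stay in a compact box.
theorem totallyBounded_image_bernOp {c : ℝ} (hc : 0 < c) (hl : ∀ n, c ≤ l n)
    {K : Set (LambdaSpace l)} (hK : ∃ C : ℝ≥0∞, C < ⊤ ∧ ∀ f ∈ K, lamNorm l ⇑f ≤ C) (n : ℕ) :
    TotallyBounded (bernOp l n '' K) := by
  obtain ⟨C, hC, hKC⟩ := hK
  let M : ℝ≥0 := ((l 0).toNNReal + 1) * C.toNNReal
  let b (k : Fin (n + 1)) (x : ℝ) : ℝ := (bernsteinPolynomial ℝ n k).eval x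
  have h_b (k : Fin (n + 1)) : lamNorm l (b k) < ⊤ :=
    lamNorm_lt_top_of_contDiff hc hl (by
      simpa using (bernsteinPolynomial ℝ n k).contDiff_aeval (𝕜 := ℝ) 1)
  refine ((isCompact_closedBall (0 : Fin (n + 1) → ℝ) M).totallyBounded.image
    (lipschitzWith_linComb h_b).uniformContinuous).subset ?_
  rintro _ ⟨f, hf, rfl⟩
  refine ⟨fun k => f ((k : ℝ) / n), ?_, bern_eq_sum_mul_eval.symm⟩
  refine mem_closedBall_zero_iff.2 ((pi_norm_le_iff_of_nonneg M.2).2 fun k => ?_)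
  have h_node : (k : ℝ) / n ∈ Icc (0 : ℝ) 1 :=
    ⟨by positivity, div_le_one_of_le₀ (mod_cast Fin.is_le k) (by positivity)⟩
  have h_val : ‖f ((k : ℝ) / n)‖ₑ ≤ M := by
    rw [ENNReal.coe_mul, ENNReal.coe_toNNReal hC.ne]
    exact (enorm_apply_le_mul_lamNorm (hc.trans_le (hl 0)) h_node).trans
      (by gcongr; exact hKC f hf)
  exact mod_cast enorm_le_coe.1 h_val

theorem isSeqCompact_iff {K : Set (LambdaSpace l)} : IsSeqCompact K ↔
    ∀ F : ℕ → LambdaSpace l, (∀ k, F k ∈ K) → ∃ g ∈ K, ∃ φ : ℕ → ℕ, StrictMono φ ∧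
      Tendsto (fun k => lamNorm l (fun x => F (φ k) x - g x)) atTop (𝓝 0) := by
  simp only [IsSeqCompact, tendsto_iff_edist_tendsto_0]
  rfl

theorem isClosed_of_forall_tendsto {K : Set (LambdaSpace l)}
    (hK : ∀ f ∈ K, lamVar l ⇑f < ⊤)
    (hKclosed : ∀ F : ℕ → LambdaSpace l, (∀ k, F k ∈ K) → ∀ g : LambdaSpace l, lamVar l ⇑g < ⊤ →
      Tendsto (fun k => lamNorm l (fun x => F k x - g x)) atTop (𝓝 0) → g ∈ K) :
    IsClosed K := by
  refine IsSeqClosed.isClosed fun F g hF hFg => ?_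
  have h_norm : Tendsto (fun k => lamNorm l (fun x => F k x - g x)) atTop (𝓝 0) :=
    tendsto_iff_edist_tendsto_0.1 hFg
  obtain ⟨k, hk⟩ := (h_norm.eventually_lt_const ENNReal.zero_lt_top).exists
  refine hKclosed F hF g ?_ h_norm
  calc lamVar l ⇑g = lamVar l (fun x => F k x - (F k x - g x)) :=
        congrArg _ (funext fun x => (sub_sub_cancel _ _).symm)
    _ ≤ lamVar l ⇑(F k) + lamVar l (fun x => F k x - g x) := lamVarOn_sub_le
    _ < ⊤ := ENNReal.add_lt_top.2 ⟨hK _ (hF k), lamVar_le_lamNorm.trans_lt hk⟩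

theorem isCompact_iff_tendstoUniformlyOn_bernOp {c : ℝ} (hc : 0 < c) (hl : ∀ n, c ≤ l n)
    {K : Set (LambdaSpace l)} (hKsub : ∀ f ∈ K, ContinuousOn ⇑f (Icc 0 1) ∧ ContInLamVar l ⇑f)
    (hKbdd : ∃ C : ℝ≥0∞, C < ⊤ ∧ ∀ f ∈ K, lamNorm l ⇑f ≤ C) (hKclosed : IsClosed K) :
    IsCompact K ↔ TendstoUniformlyOn (bernOp l) id atTop K := by
  have := completeSpace (hc.trans_le (hl 0))
  refine ⟨fun hK => ?_, fun hB => ?_⟩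
  · have h_equi : UniformEquicontinuous (bernOp l) :=
      LipschitzWith.uniformEquicontinuous _ 1 lipschitzWith_bernOp
    refine tendstoUniformlyOn_of_equicontinuousOn hK (h_equi.equicontinuous.equicontinuousOn K)
      fun f hf => tendsto_iff_edist_tendsto_0.2 ?_
    exact tendsto_lamNorm_bern_sub (hKsub f hf).1 (hKsub f hf).2
  · have h_tb := totallyBounded_image_of_tendstoUniformlyOn hB
      (totallyBounded_image_bernOp hc hl hKbdd)
    rw [image_id] at h_tb
    exact isCompact_iff_totallyBounded_isComplete.2 ⟨h_tb, hKclosed.isComplete⟩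

end LambdaSpace

theorem compact_iff_bernstein_uniform_general {l : ℕ → ℝ} {c : ℝ} (hc : 0 < c)
    (hl : ∀ n, c ≤ l n) (K : Set (ℝ → ℝ))
    (hKsub : ∀ f ∈ K, ContinuousOn f (Icc 0 1) ∧ ContInLamVar l f)
    (hKbdd : ∃ C : ℝ≥0∞, C < ⊤ ∧ ∀ f ∈ K, lamNorm l f ≤ C)
    (hKclosed : ∀ F : ℕ → ℝ → ℝ, (∀ k, F k ∈ K) → ∀ g : ℝ → ℝ, lamVar l g < ⊤ →
      Tendsto (fun k => lamNorm l (fun x => F k x - g x)) atTop (𝓝 0) → g ∈ K) :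
    (∀ F : ℕ → ℝ → ℝ, (∀ k, F k ∈ K) → ∃ g ∈ K, ∃ φ : ℕ → ℕ, StrictMono φ ∧
        Tendsto (fun k => lamNorm l (fun x => F (φ k) x - g x)) atTop (𝓝 0)) ↔
      Tendsto (fun n => ⨆ f ∈ K, lamNorm l (fun x => bern n f x - f x)) atTop (𝓝 0) := by
  obtain ⟨C, hC, hKC⟩ := hKbdd
  have h_closed : IsClosed (X := LambdaSpace l) K := LambdaSpace.isClosed_of_forall_tendsto
    (fun f hf => lamVar_le_lamNorm.trans_lt ((hKC f hf).trans_lt hC)) hKclosed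
  calc _ ↔ IsSeqCompact (X := LambdaSpace l) K := LambdaSpace.isSeqCompact_iff.symm
    _ ↔ IsCompact (X := LambdaSpace l) K := isCompact_iff_isSeqCompact.symm
    _ ↔ TendstoUniformlyOn (LambdaSpace.bernOp l) id atTop K :=
      LambdaSpace.isCompact_iff_tendstoUniformlyOn_bernOp hc hl hKsub ⟨C, hC, hKC⟩ h_closed
    _ ↔ _ := tendstoUniformlyOn_iff_tendsto_iSup_edist

/-- If `Λ` is a proper Λ-sequence and `K ⊆ CΛBV_c` is bounded and closed
under `‖·‖_Λ`-convergence, then `K` is (sequentially) compact in the `‖·‖_Λ` norm iff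
`‖B_n f - f‖_Λ → 0` uniformly in `f ∈ K`, i.e. `sup_{f ∈ K} ‖B_n f - f‖_Λ → 0`. -/
theorem compact_iff_bernstein_uniform (l : ℕ → ℝ) (hl : IsProperLambdaSeq l)
    (K : Set (ℝ → ℝ))
    (hKsub : ∀ f ∈ K,
      ContinuousOn f (Set.Icc 0 1) ∧ lamVar l f < ⊤ ∧ ContInLamVar l f)
    (hKbdd : ∃ C : ℝ≥0∞, C < ⊤ ∧ ∀ f ∈ K, lamNorm l f ≤ C)
    (hKclosed : ∀ F : ℕ → ℝ → ℝ, (∀ k, F k ∈ K) → ∀ g : ℝ → ℝ, lamVar l g < ⊤ →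
      Tendsto (fun k => lamNorm l (fun x => F k x - g x)) atTop (𝓝 0) → g ∈ K) :
    (∀ F : ℕ → ℝ → ℝ, (∀ k, F k ∈ K) → ∃ g ∈ K, ∃ φ : ℕ → ℕ, StrictMono φ ∧
        Tendsto (fun k => lamNorm l (fun x => F (φ k) x - g x)) atTop (𝓝 0)) ↔
      Tendsto (fun n => ⨆ f ∈ K, lamNorm l (fun x => bern n f x - f x)) atTop (𝓝 0) :=
  compact_iff_bernstein_uniform_general (hl.1.2.1 0) (fun n => hl.1.1 n.zero_le) K
    (fun f hf => ⟨(hKsub f hf).1, (hKsub f hf).2.2⟩) hKbdd hKclosed
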